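/- Let m > 2 be even. There exists a constant c > 0 such that for all x, y ∈ ℝ^m, with s = ⟨x,y⟩ and t = √(|x|²|y|² − s²): (i) |A*_{(m−2)/2}(s,t) + B*_{(m−2)/2}(s,t)| ≤ c (1 + |⟨x,y⟩|)^{(m−2)/2}, and (ii) for every pair j ≠ k, |(x_j y_k − x_k y_j) C*_{(m−2)/2}(s,t)| ≤ c (1 + |⟨x,y⟩|)^{(m−2)/2}. -/

import Mathlib

open scoped BigOperators
open MeasureTheory

noncomputable section

namespace CliffordFourier

/-- The entire function `J̃_a(t) = t^{-a} J_a(t) = Σ_{j≥0} (-1)^j (t/2)^{2j} / (j! Γ(j+a+1) 2^a)`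
(for `t > 0` this is literally `t^{-a} J_a(t)`). -/
def besselJt (a t : ℝ) : ℝ :=
  ∑' j : ℕ, ((-1 : ℝ)^j * (t/2) ^ (2*j)) / (j.factorial * Real.Gamma ((j : ℝ) + a + 1) * (2:ℝ)^a)

/-- `A*_{(m-2)/2}(s,t) = Σ_{ℓ=0}^{⌊m/4-3/4⌋} s^{m/2-2-2ℓ} (1/(2^ℓ ℓ!)) Γ(m/2)/Γ(m/2-2ℓ-1) J̃_{(m-2ℓ-3)/2}(t)`. -/
def Astar (m : ℕ) (s t : ℝ) : ℝ :=
  ∑ l ∈ Finset.range ((m - 3)/4 + 1),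
    s ^ (m/2 - 2 - 2*l) * (1 / ((2:ℝ)^l * (l.factorial : ℝ))) *
      (Real.Gamma ((m:ℝ)/2) / Real.Gamma ((m:ℝ)/2 - 2*l - 1)) *
        besselJt (((m:ℝ) - 2*l - 3)/2) t

/-- `B*_{(m-2)/2}(s,t) = -Σ_{ℓ=0}^{⌊m/4-1/2⌋} s^{m/2-1-2ℓ} (1/(2^ℓ ℓ!)) Γ(m/2)/Γ(m/2-2ℓ) J̃_{(m-2ℓ-3)/2}(t)`. -/
def Bstar (m : ℕ) (s t : ℝ) : ℝ :=
  -∑ l ∈ Finset.range ((m - 2)/4 + 1),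
    s ^ (m/2 - 1 - 2*l) * (1 / ((2:ℝ)^l * (l.factorial : ℝ))) *
      (Real.Gamma ((m:ℝ)/2) / Real.Gamma ((m:ℝ)/2 - 2*l)) *
        besselJt (((m:ℝ) - 2*l - 3)/2) t

/-- `C*_{(m-2)/2}(s,t) = -Σ_{ℓ=0}^{⌊m/4-1/2⌋} s^{m/2-1-2ℓ} (1/(2^ℓ ℓ!)) Γ(m/2)/Γ(m/2-2ℓ) J̃_{(m-2ℓ-1)/2}(t)`. -/
def Cstar (m : ℕ) (s t : ℝ) : ℝ :=
  -∑ l ∈ Finset.range ((m - 2)/4 + 1),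
    s ^ (m/2 - 1 - 2*l) * (1 / ((2:ℝ)^l * (l.factorial : ℝ))) *
      (Real.Gamma ((m:ℝ)/2) / Real.Gamma ((m:ℝ)/2 - 2*l)) *
        besselJt (((m:ℝ) - 2*l - 1)/2) t

/-- The Euclidean inner product `⟨x,y⟩ = Σ_i x_i y_i`. -/
def ip {m : ℕ} (x y : Fin m → ℝ) : ℝ := ∑ i, x i * y i

lemma term_bound (a : ℝ) (ha : -1/2 ≤ a) (t : ℝ) (j : ℕ) :
    ‖((-1 : ℝ)^j * (t/2) ^ (2*j)) / (j.factorial * Real.Gamma ((j : ℝ) + a + 1) * (2:ℝ)^a)‖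
      ≤ (t^2/2)^j / j.factorial * (1 / (Real.Gamma (a+1) * (2:ℝ)^a)) := by
  have hG : ∀ j : ℕ, Real.Gamma (a+1) * (1/2)^j ≤ Real.Gamma ((j:ℝ)+a+1) := by
    intro j
    induction j with
    | zero => simp
    | succ j ih =>
      have hp : (1/2:ℝ) ≤ (j:ℝ)+a+1 := by
        have : (0:ℝ) ≤ j := Nat.cast_nonneg j
        linarith
      have : (((j+1:ℕ):ℝ)+a+1) = ((j:ℝ)+a+1)+1 := by push_cast; ring
      rw [this, Real.Gamma_add_one (s := (j:ℝ)+a+1) (by linarith)]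
      have h0 : 0 < Real.Gamma (a+1) := Real.Gamma_pos_of_pos (by linarith)
      have : 0 ≤ Real.Gamma (a+1) * (1/2:ℝ)^j := by positivity
      rw [pow_succ]
      nlinarith
  have h0 : 0 < Real.Gamma (a+1) := Real.Gamma_pos_of_pos (by linarith)
  have h2 : (0:ℝ) < (2:ℝ)^a := by positivity
  have hf : (0:ℝ) < (j.factorial:ℝ) := by exact_mod_cast j.factorial_pos
  have h1 : 0 < Real.Gamma ((j:ℝ)+a+1) := lt_of_lt_of_le (by positivity) (hG j)
  have e : ‖((-1 : ℝ)^j * (t/2) ^ (2*j)) / (j.factorial * Real.Gamma ((j : ℝ) + a + 1) * (2:ℝ)^a)‖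
      = (t^2/4)^j / (j.factorial * Real.Gamma ((j : ℝ) + a + 1) * (2:ℝ)^a) := by
    rw [norm_div, norm_mul, norm_pow, norm_neg, norm_one, one_pow, one_mul, pow_mul,
      Real.norm_of_nonneg (by positivity), Real.norm_of_nonneg (by positivity)]
    congr 2
    ring
  rw [e]
  have e2 : (t^2/2)^j / j.factorial * (1 / (Real.Gamma (a+1) * (2:ℝ)^a))
      = (t^2/4)^j / (j.factorial * (Real.Gamma (a+1) * (1/2)^j) * (2:ℝ)^a) := by
    have : (t^2/2)^j = (t^2/4)^j / (1/2)^j := by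
      rw [← div_pow]; congr 1; ring
    rw [this]
    field_simp
  rw [e2]
  have := hG j
  gcongr

lemma term_summable (a : ℝ) (ha : -1/2 ≤ a) (t : ℝ) :
    Summable fun j : ℕ =>
      ((-1 : ℝ)^j * (t/2) ^ (2*j)) / (j.factorial * Real.Gamma ((j : ℝ) + a + 1) * (2:ℝ)^a) :=
  Summable.of_norm_bounded ((Real.summable_pow_div_factorial (t^2/2)).mul_right _)
    (term_bound a ha t)

lemma small_bound (a : ℝ) (ha : -1/2 ≤ a) : ∃ C : ℝ, ∀ t : ℝ, |t| ≤ 1 → |besselJt a t| ≤ C := by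
  refine ⟨∑' j : ℕ, (1/2:ℝ)^j / j.factorial * (1 / (Real.Gamma (a+1) * (2:ℝ)^a)), fun t ht => ?_⟩
  rw [← Real.norm_eq_abs]
  unfold besselJt
  refine tsum_of_norm_bounded
    ((Real.summable_pow_div_factorial (1/2)).mul_right _).hasSum (fun j => ?_)
  refine (term_bound a ha t j).trans ?_
  have h0 : 0 < Real.Gamma (a+1) := Real.Gamma_pos_of_pos (by linarith)
  have h2 : (0:ℝ) < (2:ℝ)^a := by positivity
  have : t^2 ≤ 1 := by rwa [sq_le_one_iff_abs_le_one]
  gcongr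

lemma recur (a : ℝ) (ha : 1/2 ≤ a) (t : ℝ) :
    t^2 * besselJt (a+1) t = 2 * a * besselJt a t - besselJt (a-1) t := by
  unfold besselJt
  have s1 := term_summable (a-1) (by linarith) t
  have s2 := (term_summable a (by linarith) t).mul_left (2*a)
  rw [← tsum_mul_left, ← tsum_mul_left, ← s2.tsum_sub s1, (s2.sub s1).tsum_eq_zero_add]
  have hz : 2 * a * (((-1:ℝ)^0 * (t/2) ^ (2*0)) / ((Nat.factorial 0) * Real.Gamma (((0:ℕ) : ℝ) + a + 1) * (2:ℝ)^a)) -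
     (((-1:ℝ)^0 * (t/2) ^ (2*0)) / ((Nat.factorial 0) * Real.Gamma (((0:ℕ) : ℝ) + (a-1) + 1) * (2:ℝ)^(a-1))) = 0 := by
    have e1 : (((0:ℕ) : ℝ) + (a-1) + 1) = a := by push_cast; ring
    have e2 : (((0:ℕ) : ℝ) + a + 1) = a + 1 := by push_cast; ring
    rw [e1, e2, Real.Gamma_add_one (by linarith), Real.rpow_sub_one (by norm_num)]
    have h0 : Real.Gamma a ≠ 0 := (Real.Gamma_pos_of_pos (by linarith)).ne'
    have h2 : (2:ℝ)^a ≠ 0 := by positivity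
    have h3 : a ≠ 0 := by linarith
    simp
    field_simp
    ring
  rw [hz, zero_add]
  refine tsum_congr fun j => ?_
  have hj : (0:ℝ) ≤ j := Nat.cast_nonneg j
  have e1 : (((j+1:ℕ) : ℝ) + (a-1) + 1) = (j:ℝ) + a + 1 := by push_cast; ring
  have e2 : (((j+1:ℕ) : ℝ) + a + 1) = ((j:ℝ) + a + 1) + 1 := by push_cast; ring
  have e3 : ((j : ℝ) + (a+1) + 1) = ((j:ℝ) + a + 1) + 1 := by ring
  rw [e1, e2, e3, Real.Gamma_add_one (by linarith), Real.rpow_sub_one (by norm_num),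
    Real.rpow_add_one (by norm_num), Nat.factorial_succ]
  have h0 : Real.Gamma ((j:ℝ)+a+1) ≠ 0 := (Real.Gamma_pos_of_pos (by linarith)).ne'
  have h2 : (2:ℝ)^a ≠ 0 := by positivity
  have h3 : (j:ℝ)+a+1 ≠ 0 := by linarith
  have h4 : (j.factorial:ℝ) ≠ 0 := by exact_mod_cast j.factorial_ne_zero
  have h5 : (j:ℝ)+1 ≠ 0 := by linarith
  have p1 : (t/2)^(2*(j+1)) = (t/2)^(2*j) * (t^2/4) := by
    rw [mul_add, pow_add]; ring
  rw [p1, pow_succ (-1:ℝ) j]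
  push_cast
  clear hz s1 s2
  generalize (t/2)^(2*j) = X
  generalize Real.Gamma ((j:ℝ)+a+1) = G at *
  generalize (2:ℝ)^a = W at *
  generalize (j.factorial:ℝ) = F at *
  generalize (-1:ℝ)^j = S
  field_simp
  ring

lemma gam_half (j : ℕ) : (j.factorial:ℝ) * Real.Gamma ((j:ℝ)+1/2) * 4^j
    = (2*j).factorial * √Real.pi := by
  induction j with
  | zero => simpa using Real.Gamma_one_half_eq
  | succ j ih =>
    have hj : (0:ℝ) ≤ j := Nat.cast_nonneg j
    have : (((j+1:ℕ):ℝ)+1/2) = ((j:ℝ)+1/2)+1 := by push_cast; ring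
    rw [this, Real.Gamma_add_one (by linarith), show 2*(j+1) = 2*j+1+1 by ring,
      Nat.factorial_succ, Nat.factorial_succ, Nat.factorial_succ]
    push_cast
    linear_combination ((j:ℝ)+1)*((j:ℝ)+1/2)*4*ih

lemma gam_half' (j : ℕ) : (j.factorial:ℝ) * Real.Gamma ((j:ℝ)+1/2+1) * 4^j * 2
    = (2*j+1).factorial * √Real.pi := by
  have hj : (0:ℝ) ≤ j := Nat.cast_nonneg j
  rw [Real.Gamma_add_one (by linarith), Nat.factorial_succ]
  push_cast
  linear_combination (2*(j:ℝ)+1) * gam_half j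

lemma base0 (t : ℝ) : besselJt (-1/2) t = Real.cos t * (1/(√Real.pi * (2:ℝ)^(-1/2:ℝ))) := by
  refine HasSum.tsum_eq ?_
  have hh := (Real.hasSum_cos t).mul_right (1/(√Real.pi * (2:ℝ)^(-1/2:ℝ)))
  refine Eq.mp (congrArg (fun f : ℕ → ℝ => HasSum f _) (funext fun j => ?_)) hh
  symm
  have hj : (0:ℝ) ≤ j := Nat.cast_nonneg j
  have e : (j:ℝ) + -1/2 + 1 = j + 1/2 := by ring
  have h1 : √Real.pi ≠ 0 := (Real.sqrt_pos.2 Real.pi_pos).ne'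
  have h2 : (2:ℝ)^(-1/2:ℝ) ≠ 0 := by positivity
  have h3 : (j.factorial:ℝ) ≠ 0 := by exact_mod_cast j.factorial_ne_zero
  have h4 : ((2*j).factorial:ℝ) ≠ 0 := by exact_mod_cast (2*j).factorial_ne_zero
  have h5 : Real.Gamma ((j:ℝ)+1/2) ≠ 0 := (Real.Gamma_pos_of_pos (by linarith)).ne'
  have g := gam_half j
  have p : (t/2)^(2*j) = t^(2*j)/4^j := by
    rw [div_pow, pow_mul 2]; norm_num
  rw [e, p, div_mul_div_comm, mul_one, mul_div_assoc', div_div, div_eq_div_iff (by positivity) (by positivity)]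
  linear_combination -((-1)^j * t^(2*j) * (2:ℝ)^(-1/2:ℝ)) * g

lemma base1 (t : ℝ) : t * besselJt (1/2) t = Real.sin t * (2/(√Real.pi * (2:ℝ)^(1/2:ℝ))) := by
  unfold besselJt
  rw [← tsum_mul_left]
  refine HasSum.tsum_eq ?_
  have hh := (Real.hasSum_sin t).mul_right (2/(√Real.pi * (2:ℝ)^(1/2:ℝ)))
  refine Eq.mp (congrArg (fun f : ℕ → ℝ => HasSum f _) (funext fun j => ?_)) hh
  symm
  have hj : (0:ℝ) ≤ j := Nat.cast_nonneg j
  have h1 : √Real.pi ≠ 0 := (Real.sqrt_pos.2 Real.pi_pos).ne'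
  have h2 : (2:ℝ)^(1/2:ℝ) ≠ 0 := by positivity
  have h3 : (j.factorial:ℝ) ≠ 0 := by exact_mod_cast j.factorial_ne_zero
  have h4 : ((2*j+1).factorial:ℝ) ≠ 0 := by exact_mod_cast (2*j+1).factorial_ne_zero
  have h5 : Real.Gamma ((j:ℝ)+1/2+1) ≠ 0 := (Real.Gamma_pos_of_pos (by linarith)).ne'
  have g := gam_half' j
  have p : (t/2)^(2*j) = t^(2*j)/4^j := by
    rw [div_pow, pow_mul 2]; norm_num
  rw [p, div_mul_div_comm, mul_div_assoc', mul_div_assoc', mul_div_assoc', div_div, div_eq_div_iff (by positivity) (by positivity)]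
  linear_combination -(t*(-1)^j * t^(2*j) * (2:ℝ)^(1/2:ℝ)) * g

lemma large_bound (n : ℕ) : ∃ C : ℝ, ∀ t : ℝ, 1 ≤ |t| →
    |besselJt ((n:ℝ)-1/2) t| ≤ C ∧ |t * besselJt ((n:ℝ)+1/2) t| ≤ C := by
  induction n with
  | zero =>
    refine ⟨max |1/(√Real.pi * (2:ℝ)^(-1/2:ℝ))| |2/(√Real.pi * (2:ℝ)^(1/2:ℝ))|, fun t _ => ?_⟩
    have e0 : ((0:ℕ):ℝ) - 1/2 = -1/2 := by norm_num
    have e1 : ((0:ℕ):ℝ) + 1/2 = 1/2 := by norm_num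
    rw [e0, e1, base0, base1, abs_mul, abs_mul]
    exact ⟨(mul_le_of_le_one_left (abs_nonneg _) (Real.abs_cos_le_one t)).trans (le_max_left _ _),
      (mul_le_of_le_one_left (abs_nonneg _) (Real.abs_sin_le_one t)).trans (le_max_right _ _)⟩
  | succ n ih =>
    obtain ⟨C, hC⟩ := ih
    refine ⟨(2*((n:ℝ)+1/2)) * C + C, fun t ht => ?_⟩
    obtain ⟨h1, h2⟩ := hC t ht
    have hn : (0:ℝ) ≤ n := Nat.cast_nonneg n
    have hC0 : 0 ≤ C := (abs_nonneg _).trans h1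
    have e0 : ((n+1:ℕ):ℝ) - 1/2 = n + 1/2 := by push_cast; ring
    have e1 : ((n+1:ℕ):ℝ) + 1/2 = n + 1/2 + 1 := by push_cast; ring
    rw [e0, e1]
    have key : ∀ x : ℝ, |x| ≤ |t * x| := fun x => by
      rw [abs_mul]; exact le_mul_of_one_le_left (abs_nonneg _) ht
    have h3 : |besselJt ((n:ℝ)+1/2) t| ≤ C := (key _).trans h2
    have r := recur ((n:ℝ)+1/2) (by linarith) t
    rw [show (n:ℝ)+1/2-1 = n - 1/2 by ring] at r
    refine ⟨h3.trans (by nlinarith), ?_⟩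
    refine (key _).trans ?_
    rw [← mul_assoc, ← sq, r]
    refine (abs_sub _ _).trans ?_
    rw [abs_mul, abs_of_nonneg (by linarith : 0 ≤ 2*((n:ℝ)+1/2))]
    gcongr

lemma bess_bound (n : ℕ) : ∃ C : ℝ, 0 ≤ C ∧ ∀ t : ℝ,
    |besselJt ((n:ℝ)+1/2) t| ≤ C ∧ |t * besselJt ((n:ℝ)+1/2) t| ≤ C := by
  have hn : (0:ℝ) ≤ n := Nat.cast_nonneg n
  obtain ⟨C, hC⟩ := large_bound n
  obtain ⟨D, hD⟩ := small_bound ((n:ℝ)+1/2) (by linarith)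
  refine ⟨max C D, ((abs_nonneg _).trans (hD 0 (by simp))).trans (le_max_right _ _), fun t => ?_⟩
  rcases le_total |t| 1 with ht | ht
  · have := hD t ht
    refine ⟨this.trans (le_max_right _ _), ?_⟩
    rw [abs_mul]
    exact ((mul_le_of_le_one_left (abs_nonneg _) ht).trans this).trans (le_max_right _ _)
  · have := (hC t ht).2
    refine ⟨?_, this.trans (le_max_left _ _)⟩
    refine le_trans ?_ (this.trans (le_max_left _ _))
    rw [abs_mul]; exact le_mul_of_one_le_left (abs_nonneg _) ht

lemma sum_bound (N k : ℕ) (F : ℕ → ℝ → ℝ → ℝ)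
    (h : ∀ l < N, ∃ C : ℝ, 0 ≤ C ∧ ∀ s t, |F l s t| ≤ C * (1+|s|)^k) :
    ∃ C : ℝ, 0 ≤ C ∧ ∀ s t, |∑ l ∈ Finset.range N, F l s t| ≤ C * (1+|s|)^k := by
  induction N with
  | zero => exact ⟨0, le_rfl, fun s t => by simp⟩
  | succ N ih =>
    obtain ⟨C, hC, h1⟩ := ih (fun l hl => h l (by omega))
    obtain ⟨D, hD, h2⟩ := h N (by omega)
    refine ⟨C + D, by positivity, fun s t => ?_⟩
    rw [Finset.sum_range_succ, add_mul]
    exact (abs_add_le _ _).trans (add_le_add (h1 s t) (h2 s t))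

lemma summand_bound (k p : ℕ) (hp : p ≤ k) (b c a : ℝ) (g : ℝ → ℝ) (C : ℝ) (hC : 0 ≤ C)
    (hg : ∀ t, |g t * besselJt a t| ≤ C) :
    ∃ D : ℝ, 0 ≤ D ∧ ∀ s t, |g t * (s^p * b * c * besselJt a t)| ≤ D * (1+|s|)^k := by
  refine ⟨|b| * |c| * C, by positivity, fun s t => ?_⟩
  have e : g t * (s^p * b * c * besselJt a t) = b * c * (g t * besselJt a t) * s^p := by ring
  rw [e, abs_mul, abs_mul, abs_mul, abs_pow]
  have h1 : |s|^p ≤ (1+|s|)^k :=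
    (pow_le_pow_left₀ (abs_nonneg _) (by linarith) p).trans
      (pow_le_pow_right₀ (by linarith [abs_nonneg s]) hp)
  have := hg t
  gcongr

lemma lagr {m : ℕ} (x y : Fin m → ℝ) (j k : Fin m) (hjk : j ≠ k) :
    (x j * y k - x k * y j)^2 ≤ ip x x * ip y y - ip x y^2 := by
  have h : ∑ p : Fin m × Fin m, (x p.1 * y p.2 - x p.2 * y p.1)^2
      = 2 * (ip x x * ip y y - ip x y^2) := by
    have e : ∀ p : Fin m × Fin m, (x p.1 * y p.2 - x p.2 * y p.1)^2
      = (x p.1 * x p.1) * (y p.2 * y p.2) + (y p.1 * y p.1) * (x p.2 * x p.2)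
        - 2 * ((x p.1 * y p.1) * (x p.2 * y p.2)) := fun p => by ring
    simp_rw [e, Finset.sum_sub_distrib, Finset.sum_add_distrib, ← Finset.mul_sum,
      Fintype.sum_prod_type, ← Finset.mul_sum, ← Finset.sum_mul]
    unfold ip
    ring
  have h2 : ∑ p ∈ ({(j,k),(k,j)} : Finset (Fin m × Fin m)), (x p.1 * y p.2 - x p.2 * y p.1)^2
      ≤ ∑ p : Fin m × Fin m, (x p.1 * y p.2 - x p.2 * y p.1)^2 :=
    Finset.sum_le_sum_of_subset_of_nonneg (Finset.subset_univ _) (fun _ _ _ => sq_nonneg _)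
  rw [h, Finset.sum_pair (by simp [hjk])] at h2
  nlinarith

/-- For even `m > 2` the functions in the explicit formula of the Clifford-Fourier kernel
satisfy the bounds `|A* + B*| ≤ c (1 + |⟨x,y⟩|)^{(m-2)/2}` and
`|(x_j y_k - x_k y_j) C*| ≤ c (1 + |⟨x,y⟩|)^{(m-2)/2}`. -/
theorem kernel_component_bounds (m : ℕ) (hme : Even m) (hm : 2 < m) :
    ∃ c : ℝ, 0 < c ∧ ∀ x y : Fin m → ℝ,
      (|Astar m (ip x y) (Real.sqrt (ip x x * ip y y - ip x y^2))
          + Bstar m (ip x y) (Real.sqrt (ip x x * ip y y - ip x y^2))|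
        ≤ c * (1 + |ip x y|) ^ ((m - 2)/2)) ∧
      (∀ j k : Fin m, j ≠ k →
        |(x j * y k - x k * y j) *
            Cstar m (ip x y) (Real.sqrt (ip x x * ip y y - ip x y^2))|
          ≤ c * (1 + |ip x y|) ^ ((m - 2)/2)) := by
  obtain ⟨M, rfl⟩ := hme
  have key : ∀ (l : ℕ) (q : ℝ) (N : ℕ), q = (N:ℝ) + 1/2 → ∃ C : ℝ, 0 ≤ C ∧ ∀ t : ℝ,
      |besselJt q t| ≤ C ∧ |t * besselJt q t| ≤ C := by
    rintro l q N rfl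
    exact bess_bound N
  have hA : ∃ C : ℝ, 0 ≤ C ∧ ∀ s t, |Astar (M+M) s t| ≤ C * (1+|s|)^((M+M-2)/2) := by
    refine sum_bound _ _ _ (fun l hl => ?_)
    obtain ⟨C, hC, h⟩ := key l ((((M+M:ℕ):ℝ) - 2*l - 3)/2) (M-2-l) (by
      rw [Nat.cast_sub (by omega), Nat.cast_sub (by omega)]; push_cast; ring)
    simpa using summand_bound ((M+M-2)/2) ((M+M)/2-2-2*l) (by omega) (1 / ((2:ℝ)^l * (l.factorial : ℝ)))
      (Real.Gamma (((M+M:ℕ):ℝ)/2) / Real.Gamma (((M+M:ℕ):ℝ)/2 - 2*l - 1)) _ (fun _ => 1) C hC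
      (fun t => by simpa using (h t).1)
  have hB : ∃ C : ℝ, 0 ≤ C ∧ ∀ s t, |Bstar (M+M) s t| ≤ C * (1+|s|)^((M+M-2)/2) := by
    unfold Bstar
    simp only [abs_neg]
    refine sum_bound _ _ _ (fun l hl => ?_)
    obtain ⟨C, hC, h⟩ := key l ((((M+M:ℕ):ℝ) - 2*l - 3)/2) (M-2-l) (by
      rw [Nat.cast_sub (by omega), Nat.cast_sub (by omega)]; push_cast; ring)
    simpa using summand_bound ((M+M-2)/2) ((M+M)/2-1-2*l) (by omega) (1 / ((2:ℝ)^l * (l.factorial : ℝ)))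
      (Real.Gamma (((M+M:ℕ):ℝ)/2) / Real.Gamma (((M+M:ℕ):ℝ)/2 - 2*l)) _ (fun _ => 1) C hC
      (fun t => by simpa using (h t).1)
  have hC : ∃ C : ℝ, 0 ≤ C ∧ ∀ s t, |t * Cstar (M+M) s t| ≤ C * (1+|s|)^((M+M-2)/2) := by
    unfold Cstar
    simp only [mul_neg, abs_neg, Finset.mul_sum]
    refine sum_bound _ _ (fun l s t => t * _) (fun l hl => ?_)
    obtain ⟨C, hC, h⟩ := key l ((((M+M:ℕ):ℝ) - 2*l - 1)/2) (M-1-l) (by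
      rw [Nat.cast_sub (by omega), Nat.cast_sub (by omega)]; push_cast; ring)
    exact summand_bound ((M+M-2)/2) ((M+M)/2-1-2*l) (by omega) (1 / ((2:ℝ)^l * (l.factorial : ℝ)))
      (Real.Gamma (((M+M:ℕ):ℝ)/2) / Real.Gamma (((M+M:ℕ):ℝ)/2 - 2*l)) _ (fun t => t) C hC
      (fun t => (h t).2)
  obtain ⟨a, ha, hA⟩ := hA
  obtain ⟨b, hb, hB⟩ := hB
  obtain ⟨c, hc, hC⟩ := hC
  refine ⟨a + b + c + 1, by positivity, fun x y => ?_⟩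
  have hP : 0 ≤ (1 + |ip x y|) ^ ((M+M-2)/2) := by positivity
  set s := ip x y
  set t := Real.sqrt (ip x x * ip y y - s^2) with ht
  constructor
  · refine (abs_add_le _ _).trans ((add_le_add (hA s t) (hB s t)).trans ?_)
    rw [← add_mul]
    exact mul_le_mul_of_nonneg_right (by linarith) hP
  · intro j k hjk
    have h1 : |x j * y k - x k * y j| ≤ |t| := by
      rw [abs_of_nonneg (Real.sqrt_nonneg _)]
      exact Real.abs_le_sqrt (lagr x y j k hjk)
    refine le_trans ?_ ((hC s t).trans (mul_le_mul_of_nonneg_right (by linarith) hP))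
    rw [abs_mul, abs_mul]
    exact mul_le_mul_of_nonneg_right h1 (abs_nonneg _)

end CliffordFourier
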